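/- arXiv:1809.02188 — 3 statements merged into one kernel-verified Lean document; each statement's English description precedes it below -/
import Mathlib

section
/- Let h : ℝ → [0,∞) and t : ℝ → ℝ be measurable, and suppose Z(η) := ∫_ℝ h(x)·exp(η·t(x)) dx is finite and positive for all η in an open interval I ⊆ ℝ. Let F(c; η) := ∫_{-∞}^{c} h(x)·exp(η·t(x) − log Z(η)) dx, and fix v < w such that g(η) := log(F(w; η) − F(v; η)) is well-defined and differentiable on I. Then for every η₀ ∈ I, the mean of t under the truncated density p̂(x | η₀) = 1_{[v,w]}(x)·h(x)·exp(η₀·t(x) − Â(η₀)), where Â(η₀) = log ∫_v^w h(x)·exp(η₀·t(x)) dx, satisfies E_{p̂}[t] = E_{p}[t] + g′(η₀), where E_{p}[t] is the mean of t under the untruncated density p(x | η₀) = h(x)·exp(η₀·t(x) − log Z(η₀)). -/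
open MeasureTheory

lemma aux_hasDeriv (ν : Measure ℝ) (h t : ℝ → ℝ) (hh : Measurable h) (hh0 : ∀ x, 0 ≤ h x)
    (a b : ℝ)
    (hfin : ∀ η ∈ Set.Ioo a b, Integrable (fun x => h x * Real.exp (η * t x)) ν)
    (η₀ : ℝ) (hη : η₀ ∈ Set.Ioo a b) :
    HasDerivAt (fun η => ∫ x, h x * Real.exp (η * t x) ∂ν)
      (∫ x, t x * (h x * Real.exp (η₀ * t x)) ∂ν) η₀ := by
  have hm : Measurable (fun x => (h x).toNNReal) := hh.real_toNNReal
  have hint : ∀ f : ℝ → ℝ, ∫ x, f x ∂(ν.withDensity fun x => ((h x).toNNReal : ENNReal))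
      = ∫ x, h x * f x ∂ν := by
    intro f
    rw [integral_withDensity_eq_integral_smul hm]
    refine integral_congr_ae (Filter.Eventually.of_forall fun x => ?_)
    simp [NNReal.smul_def, Real.coe_toNNReal _ (hh0 x)]
  have hsub : Set.Ioo a b ⊆ ProbabilityTheory.integrableExpSet t
      (ν.withDensity fun x => ((h x).toNNReal : ENNReal)) := by
    intro η hη
    change Integrable _ _
    rw [integrable_withDensity_iff_integrable_smul hm]
    refine (hfin η hη).congr (Filter.Eventually.of_forall fun x => ?_)
    simp [NNReal.smul_def, Real.coe_toNNReal _ (hh0 x)]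
  have key := ProbabilityTheory.hasDerivAt_mgf
    (interior_mono hsub (by rwa [isOpen_Ioo.interior_eq]))
  have e : ProbabilityTheory.mgf t (ν.withDensity fun x => ((h x).toNNReal : ENNReal))
      = fun η => ∫ x, h x * Real.exp (η * t x) ∂ν := by
    funext η
    exact hint _
  rw [e, hint] at key
  refine key.congr_deriv (integral_congr_ae (Filter.Eventually.of_forall fun x => ?_))
  change h x * (t x * _) = t x * (h x * _)
  ring

/-- Mean identity of Lemma 1: the mean of `t` under the exponential family truncated to
`[v,w]` equals the mean under the untruncated family plus the derivative of
`g(η) = log(F(w;η) - F(v;η))`. -/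
theorem truncated_mean_identity
    (h t : ℝ → ℝ) (hh : Measurable h) (hh0 : ∀ x, 0 ≤ h x) (ht : Measurable t)
    (a b : ℝ)
    (hfin : ∀ η ∈ Set.Ioo a b, Integrable (fun x => h x * Real.exp (η * t x)) volume)
    (hpos : ∀ η ∈ Set.Ioo a b, 0 < ∫ x, h x * Real.exp (η * t x))
    (A : ℝ → ℝ) (hA : ∀ η, A η = Real.log (∫ x, h x * Real.exp (η * t x)))
    (F : ℝ → ℝ → ℝ)
    (hF : ∀ c η, F c η = ∫ x in Set.Iic c, h x * Real.exp (η * t x - A η))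
    (v w : ℝ) (hvw : v < w)
    (hwell : ∀ η ∈ Set.Ioo a b, 0 < F w η - F v η)
    (g : ℝ → ℝ) (hg : ∀ η, g η = Real.log (F w η - F v η))
    (hgdiff : ∀ η ∈ Set.Ioo a b, DifferentiableAt ℝ g η)
    (Ahat : ℝ → ℝ)
    (hAhat : ∀ η, Ahat η = Real.log (∫ x in Set.Icc v w, h x * Real.exp (η * t x))) :
    ∀ η₀ ∈ Set.Ioo a b,
      (∫ x in Set.Icc v w, t x * (h x * Real.exp (η₀ * t x - Ahat η₀)))
        = (∫ x, t x * (h x * Real.exp (η₀ * t x - A η₀))) + deriv g η₀ := by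
  intro η₀ hη
  have hd1 := aux_hasDeriv volume h t hh hh0 a b hfin η₀ hη
  have hd2 := aux_hasDeriv (volume.restrict (Set.Icc v w)) h t hh hh0 a b
    (fun η hη => (hfin η hη).restrict) η₀ hη
  have hexp : ∀ (c : ℝ) η x, h x * Real.exp (η * t x - c)
      = Real.exp (-c) * (h x * Real.exp (η * t x)) := by
    intro c η x
    rw [sub_eq_add_neg, Real.exp_add]; ring
  have hFd : ∀ η ∈ Set.Ioo a b, F w η - F v η
      = Real.exp (-A η) * ∫ x in Set.Icc v w, h x * Real.exp (η * t x) := by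
    intro η hη
    have hi : Integrable (fun x => h x * Real.exp (η * t x - A η)) volume := by
      simp only [hexp]
      exact (hfin η hη).const_mul _
    rw [hF, hF, intervalIntegral.integral_Iic_sub_Iic hi.integrableOn hi.integrableOn,
      intervalIntegral.integral_of_le hvw.le, ← integral_Icc_eq_integral_Ioc]
    simp only [hexp]
    rw [integral_const_mul]
  have hZt : ∀ η ∈ Set.Ioo a b, 0 < ∫ x in Set.Icc v w, h x * Real.exp (η * t x) := by
    intro η hη
    have := hwell η hη
    rw [hFd η hη] at this
    exact pos_of_mul_pos_right this (Real.exp_pos _).le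
  have hge : g =ᶠ[nhds η₀] fun η => Real.log (∫ x in Set.Icc v w, h x * Real.exp (η * t x))
      - Real.log (∫ x, h x * Real.exp (η * t x)) := by
    filter_upwards [isOpen_Ioo.mem_nhds hη] with η hη
    rw [hg, hFd η hη, Real.log_mul (Real.exp_pos _).ne' (hZt η hη).ne', Real.log_exp, hA]
    ring
  rw [(HasDerivAt.congr_of_eventuallyEq ((hd2.log (hZt η₀ hη).ne').sub (hd1.log (hpos η₀ hη).ne')) hge).deriv]
  have e2 : ∀ (c x : ℝ), t x * (h x * Real.exp (η₀ * t x - c))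
      = Real.exp (-c) * (t x * (h x * Real.exp (η₀ * t x))) := by
    intro c x
    rw [hexp]; ring
  simp only [e2]
  rw [integral_const_mul, integral_const_mul, hA, hAhat, Real.exp_neg, Real.exp_neg,
    Real.exp_log (hpos η₀ hη), Real.exp_log (hZt η₀ hη)]
  ring
end

section
/- Let h : ℝ → [0,∞) and t : ℝ → ℝ be measurable, and suppose Z(η) := ∫_ℝ h(x)·exp(η·t(x)) dx is finite and positive for all η in an open interval I ⊆ ℝ. Let F(c; η) := ∫_{-∞}^{c} h(x)·exp(η·t(x) − log Z(η)) dx, and fix v < w such that g(η) := log(F(w; η) − F(v; η)) is well-defined and twice differentiable on I. Then for every η₀ ∈ I, the variance of t under the truncated density p̂(x | η₀) = 1_{[v,w]}(x)·h(x)·exp(η₀·t(x) − Â(η₀)), where Â(η₀) = log ∫_v^w h(x)·exp(η₀·t(x)) dx, satisfies Var_{p̂}[t] = Var_{p}[t] + g″(η₀), where Var_{p}[t] is the variance of t under the untruncated density p(x | η₀) = h(x)·exp(η₀·t(x) − log Z(η₀)). -/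
open MeasureTheory

lemma moment_hasDerivAt (ν : Measure ℝ)
    (h t : ℝ → ℝ) (hh : Measurable h) (hh0 : ∀ x, 0 ≤ h x)
    (a b : ℝ)
    (hfin : ∀ η ∈ Set.Ioo a b, Integrable (fun x => h x * Real.exp (η * t x)) ν)
    (n : ℕ) (η : ℝ) (hη : η ∈ Set.Ioo a b) :
    HasDerivAt (fun s => ∫ x, t x ^ n * (h x * Real.exp (s * t x)) ∂ν)
      (∫ x, t x ^ (n + 1) * (h x * Real.exp (η * t x)) ∂ν) η := by
  have hm : Measurable (fun x => ENNReal.ofReal (h x)) := hh.ennreal_ofReal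
  have hlt : ∀ᵐ x ∂ν, ENNReal.ofReal (h x) < ⊤ := by simp
  set μ := ν.withDensity (fun x => ENNReal.ofReal (h x)) with hμ
  have hsub : Set.Ioo a b ⊆ ProbabilityTheory.integrableExpSet t μ := by
    intro s hs
    show Integrable (fun x => Real.exp (s * t x)) μ
    rw [hμ, integrable_withDensity_iff_integrable_smul' hm hlt]
    refine (hfin s hs).congr (Filter.Eventually.of_forall fun x => ?_)
    simp [ENNReal.toReal_ofReal (hh0 x)]
  have key := ProbabilityTheory.hasDerivAt_integral_pow_mul_exp_real
    (interior_maximal hsub isOpen_Ioo hη) n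
  have conv : ∀ (k : ℕ) (s : ℝ), ∫ x, t x ^ k * Real.exp (s * t x) ∂μ
      = ∫ x, t x ^ k * (h x * Real.exp (s * t x)) ∂ν := by
    intro k s
    rw [hμ, integral_withDensity_eq_integral_toReal_smul hm hlt]
    congr 1
    ext x
    rw [ENNReal.toReal_ofReal (hh0 x), smul_eq_mul]
    ring
  simpa only [conv] using key

lemma log_partition_derivs (ν : Measure ℝ)
    (h t : ℝ → ℝ) (hh : Measurable h) (hh0 : ∀ x, 0 ≤ h x)
    (a b : ℝ)
    (hfin : ∀ η ∈ Set.Ioo a b, Integrable (fun x => h x * Real.exp (η * t x)) ν)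
    (hpos : ∀ η ∈ Set.Ioo a b, 0 < ∫ x, h x * Real.exp (η * t x) ∂ν)
    (A : ℝ → ℝ) (hA : ∀ η, A η = Real.log (∫ x, h x * Real.exp (η * t x) ∂ν)) :
    ∃ M : ℝ → ℝ, ∀ η ∈ Set.Ioo a b, HasDerivAt A (M η) η ∧
      HasDerivAt M ((∫ x, t x ^ 2 * (h x * Real.exp (η * t x - A η)) ∂ν)
        - (∫ x, t x * (h x * Real.exp (η * t x - A η)) ∂ν) ^ 2) η := by
  have hd := moment_hasDerivAt ν h t hh hh0 a b hfin
  refine ⟨fun η => (∫ x, t x ^ 1 * (h x * Real.exp (η * t x)) ∂ν) /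
    (∫ x, h x * Real.exp (η * t x) ∂ν), fun η hη => ?_⟩
  have h0 := hd 0 η hη
  have h1 := hd 1 η hη
  simp only [pow_zero, one_mul, zero_add] at h0
  have hp := hpos η hη
  have conv : ∀ f : ℝ → ℝ, ∫ x, f x * (h x * Real.exp (η * t x - A η)) ∂ν
      = (∫ x, f x * (h x * Real.exp (η * t x)) ∂ν) / ∫ x, h x * Real.exp (η * t x) ∂ν := by
    intro f
    rw [← integral_div]
    congr 1
    ext x
    rw [Real.exp_sub, hA, Real.exp_log hp]
    ring
  constructor
  · rw [show A = _ from funext hA]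
    exact h0.log hp.ne'
  · refine (h1.div h0 hp.ne').congr_deriv ?_
    rw [conv, conv]
    simp only [pow_one]
    field_simp

/-- Variance identity of Lemma 1: the variance of `t` under the exponential family
truncated to `[v,w]` equals the variance under the untruncated family plus the second
derivative of `g(η) = log(F(w;η) - F(v;η))`. -/
theorem truncated_variance_identity
    (h t : ℝ → ℝ) (hh : Measurable h) (hh0 : ∀ x, 0 ≤ h x) (ht : Measurable t)
    (a b : ℝ)
    (hfin : ∀ η ∈ Set.Ioo a b, Integrable (fun x => h x * Real.exp (η * t x)) volume)
    (hpos : ∀ η ∈ Set.Ioo a b, 0 < ∫ x, h x * Real.exp (η * t x))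
    (A : ℝ → ℝ) (hA : ∀ η, A η = Real.log (∫ x, h x * Real.exp (η * t x)))
    (F : ℝ → ℝ → ℝ)
    (hF : ∀ c η, F c η = ∫ x in Set.Iic c, h x * Real.exp (η * t x - A η))
    (v w : ℝ) (hvw : v < w)
    (hwell : ∀ η ∈ Set.Ioo a b, 0 < F w η - F v η)
    (g : ℝ → ℝ) (hg : ∀ η, g η = Real.log (F w η - F v η))
    (hgdiff : ∀ η ∈ Set.Ioo a b, DifferentiableAt ℝ g η)
    (hgdiff2 : ∀ η ∈ Set.Ioo a b, DifferentiableAt ℝ (deriv g) η)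
    (Ahat : ℝ → ℝ)
    (hAhat : ∀ η, Ahat η = Real.log (∫ x in Set.Icc v w, h x * Real.exp (η * t x))) :
    ∀ η₀ ∈ Set.Ioo a b,
      (∫ x in Set.Icc v w, (t x) ^ 2 * (h x * Real.exp (η₀ * t x - Ahat η₀)))
          - (∫ x in Set.Icc v w, t x * (h x * Real.exp (η₀ * t x - Ahat η₀))) ^ 2
        = ((∫ x, (t x) ^ 2 * (h x * Real.exp (η₀ * t x - A η₀)))
            - (∫ x, t x * (h x * Real.exp (η₀ * t x - A η₀))) ^ 2)
          + deriv (deriv g) η₀ := by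
  have hdiff : ∀ η ∈ Set.Ioo a b, F w η - F v η
      = (∫ x in Set.Icc v w, h x * Real.exp (η * t x)) / ∫ x, h x * Real.exp (η * t x) := by
    intro η hη
    have e : ∀ x, h x * Real.exp (η * t x - A η)
        = h x * Real.exp (η * t x) / ∫ x, h x * Real.exp (η * t x) := by
      intro x
      rw [Real.exp_sub, hA, Real.exp_log (hpos η hη), mul_div_assoc]
    rw [hF, hF]
    simp only [e]
    rw [integral_div, integral_div, ← sub_div,
      intervalIntegral.integral_Iic_sub_Iic (hfin η hη).integrableOn (hfin η hη).integrableOn,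
      intervalIntegral.integral_of_le hvw.le, integral_Icc_eq_integral_Ioc]
  have hpos' : ∀ η ∈ Set.Ioo a b, 0 < ∫ x in Set.Icc v w, h x * Real.exp (η * t x) := by
    intro η hη
    have := hwell η hη
    rw [hdiff η hη] at this
    exact (div_pos_iff_of_pos_right (hpos η hη)).1 this
  have hgeq : ∀ η ∈ Set.Ioo a b, g η = Ahat η - A η := by
    intro η hη
    rw [hg, hdiff η hη, Real.log_div (hpos' η hη).ne' (hpos η hη).ne', hAhat, hA]
  obtain ⟨M, hM⟩ := log_partition_derivs volume h t hh hh0 a b hfin hpos A hA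
  obtain ⟨N, hN⟩ := log_partition_derivs (volume.restrict (Set.Icc v w)) h t hh hh0 a b
    (fun η hη => (hfin η hη).integrableOn) hpos' Ahat hAhat
  have hd1 : ∀ η ∈ Set.Ioo a b, deriv g η = N η - M η := by
    intro η hη
    have : g =ᶠ[nhds η] fun s => Ahat s - A s :=
      Filter.eventually_of_mem (isOpen_Ioo.mem_nhds hη) hgeq
    rw [this.deriv_eq]
    exact ((hN η hη).1.sub (hM η hη).1).deriv
  intro η hη
  have : deriv g =ᶠ[nhds η] fun s => N s - M s :=
    Filter.eventually_of_mem (isOpen_Ioo.mem_nhds hη) hd1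
  have h2 := ((hN η hη).2.sub (hM η hη).2).deriv
  change deriv (fun s => N s - M s) η = _ at h2
  rw [this.deriv_eq, h2]
  ring
end

section
/- For every b > 0 and every z ∈ ℝ, the Laplace density equals a scale mixture of centered normal densities with exponentially distributed variance: (1/(2b))·exp(−|z|/b) = ∫₀^∞ (1/√(2π·σ²))·exp(−z²/(2σ²)) · ℓ·exp(−ℓ·σ²) dσ², where ℓ = 1/(2b²) and the integral is over σ² ∈ (0,∞). -/
open MeasureTheory

lemma F_int (c a : ℝ) (hc : 0 < c) (ha : 0 < a) :
    IntegrableOn (fun t : ℝ => Real.exp (-(1/2) * (c * t - a / t)^2)) (Set.Ioi 0) := by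
  have h1 : Integrable (fun t : ℝ => Real.exp (a * c) * Real.exp (-(c^2/2) * t^2)) :=
    (integrable_exp_neg_mul_sq (by positivity)).const_mul _
  refine Integrable.mono' h1.integrableOn (by measurability) ?_
  refine (ae_restrict_mem measurableSet_Ioi).mono fun t ht => ?_
  have ht : 0 < t := ht
  rw [Real.norm_eq_abs, abs_of_pos (Real.exp_pos _), ← Real.exp_add]
  apply Real.exp_le_exp.2
  have : (c * t - a / t)^2 = c^2*t^2 - 2*(a*c) + (a/t)^2 := by field_simp; ring
  rw [this]
  nlinarith [sq_nonneg (a/t)]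

lemma J_pos (c a : ℝ) (hc : 0 < c) (ha : 0 < a) :
    ∫ t in Set.Ioi (0:ℝ), Real.exp (-(1/2) * (c * t - a / t)^2) = √(2*Real.pi) / (2*c) := by
  set F : ℝ → ℝ := fun t => Real.exp (-(1/2) * (c * t - a / t)^2) with hF
  have hFi : IntegrableOn F (Set.Ioi 0) := F_int c a hc ha
  -- reflection
  have him : (fun t : ℝ => a / (c * t)) '' Set.Ioi 0 = Set.Ioi 0 := by
    ext y
    simp only [Set.mem_image, Set.mem_Ioi]
    constructor
    · rintro ⟨x, hx, rfl⟩; positivity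
    · intro hy
      exact ⟨a / (c * y), by positivity, by field_simp⟩
  have hinj : Set.InjOn (fun t : ℝ => a / (c * t)) (Set.Ioi 0) := by
    intro x hx y hy h
    have hx : 0 < x := hx
    have hy : 0 < y := hy
    simp only at h
    field_simp at h
    exact h.symm
  have hder : ∀ t ∈ Set.Ioi (0:ℝ),
      HasDerivWithinAt (fun t : ℝ => a / (c * t)) (-(a / (c * t^2))) (Set.Ioi 0) t := by
    intro t ht
    have ht : 0 < t := ht
    have := ((hasDerivAt_inv ht.ne').const_mul (a/c)).hasDerivWithinAt (s := Set.Ioi 0)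
    have hf : (fun t : ℝ => a / (c * t)) = fun y => a / c * y⁻¹ := by
      funext y
      rw [← div_eq_mul_inv, div_div]
    rw [hf]
    refine this.congr_deriv ?_
    field_simp
  have hpt : Set.EqOn (fun t => |(-(a / (c * t^2)))| • F (a / (c * t)))
      (fun t => a / (c * t^2) * F t) (Set.Ioi 0) := by
    intro t ht
    have ht : 0 < t := ht
    have h1 : c * (a / (c * t)) - a / (a / (c*t)) = -(c * t - a / t) := by
      field_simp; ring
    simp only [hF, h1, abs_neg, smul_eq_mul, neg_sq]
    rw [abs_of_pos (by positivity)]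
  have e1 := integral_image_eq_integral_abs_deriv_smul measurableSet_Ioi hder hinj F
  have i1 := integrableOn_image_iff_integrableOn_abs_deriv_smul measurableSet_Ioi hder hinj F
  rw [him, setIntegral_congr_fun measurableSet_Ioi hpt] at e1
  rw [him, integrableOn_congr_fun hpt measurableSet_Ioi] at i1
  have i2 := i1.1 hFi
  -- main substitution
  have him2 : (fun t : ℝ => c * t - a / t) '' Set.Ioi 0 = Set.univ := by
    refine Set.eq_univ_of_forall fun u => ?_
    have hs := Real.sq_sqrt (show 0 ≤ u^2 + 4*a*c by positivity)
    have hlt : |u| < √(u^2 + 4*a*c) := by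
      rw [← Real.sqrt_sq_eq_abs]
      exact Real.sqrt_lt_sqrt (sq_nonneg u) (by nlinarith [mul_pos ha hc])
    set r := √(u^2 + 4*a*c)
    have hp : 0 < u + r := by linarith [neg_abs_le u]
    refine ⟨(u + r) / (2*c), by simp only [Set.mem_Ioi]; positivity, ?_⟩
    simp only
    field_simp
    nlinarith
  have hinj2 : Set.InjOn (fun t : ℝ => c * t - a / t) (Set.Ioi 0) := by
    have : StrictMonoOn (fun t : ℝ => c * t - a / t) (Set.Ioi 0) := by
      intro x hx y hy h
      have hx : 0 < x := hx
      have := div_lt_div_of_pos_left ha hx h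
      simp only
      nlinarith
    exact this.injOn
  have hder2 : ∀ t ∈ Set.Ioi (0:ℝ),
      HasDerivWithinAt (fun t : ℝ => c * t - a / t) (c + a / t^2) (Set.Ioi 0) t := by
    intro t ht
    have ht : 0 < t := ht
    have := (((hasDerivAt_id t).const_mul c).sub
      ((hasDerivAt_inv ht.ne').const_mul a)).hasDerivWithinAt (s := Set.Ioi 0)
    refine HasDerivWithinAt.congr_deriv (f' := c * 1 - a * -(t^2)⁻¹) this ?_
    ring
  have e2 := integral_image_eq_integral_abs_deriv_smul measurableSet_Ioi hder2 hinj2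
    (fun u => Real.exp (-(1/2) * u^2))
  have hpt2 : Set.EqOn (fun t => |c + a / t^2| • Real.exp (-(1/2) * (c * t - a / t)^2))
      (fun t => c * F t + c * (a / (c * t^2) * F t)) (Set.Ioi 0) := by
    intro t ht
    have ht : 0 < t := ht
    simp only [hF, smul_eq_mul]
    rw [abs_of_pos (by positivity)]
    field_simp
  rw [him2, setIntegral_univ, integral_gaussian, setIntegral_congr_fun measurableSet_Ioi hpt2,
    integral_add (hFi.const_mul c) (i2.const_mul c), integral_const_mul, integral_const_mul,
    ← e1] at e2
  rw [show Real.pi / (1/2) = 2 * Real.pi by ring] at e2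
  rw [e2]; field_simp; norm_num

lemma J_all (c a : ℝ) (hc : 0 < c) (ha : 0 ≤ a) :
    ∫ t in Set.Ioi (0:ℝ), Real.exp (-(1/2) * (c * t - a / t)^2) = √(2*Real.pi) / (2*c) := by
  rcases ha.eq_or_lt with rfl | ha
  · have := integral_gaussian_Ioi (c^2/2)
    rw [show Real.pi / (c^2/2) = (2 * Real.pi) / c^2 by field_simp,
      Real.sqrt_div (by positivity), Real.sqrt_sq hc.le] at this
    rw [show √(2*Real.pi) / (2*c) = √(2*Real.pi) / c / 2 by field_simp, ← this]
    congr 1; ext t; congr 1; simp; ring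
  · exact J_pos c a hc ha

/-- Scale-mixture-of-normals representation of the Laplace density: for every `b > 0`
and `z ∈ ℝ`, `(1/(2b)) exp(-|z|/b) = ∫₀^∞ N(z; 0, σ²) · ℓ e^{-ℓ σ²} dσ²` with
`ℓ = 1/(2b²)`. -/
theorem laplace_eq_scale_mixture_of_normals
    (b : ℝ) (hb : 0 < b) (z : ℝ) (ℓ : ℝ) (hℓ : ℓ = 1 / (2 * b ^ 2)) :
    (1 / (2 * b)) * Real.exp (-|z| / b)
      = ∫ s in Set.Ioi (0 : ℝ),
          (1 / Real.sqrt (2 * Real.pi * s)) * Real.exp (-z ^ 2 / (2 * s))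
            * (ℓ * Real.exp (-ℓ * s)) := by
  rw [← integral_comp_rpow_Ioi_of_pos (p := 2) (by norm_num)]
  have hpt : Set.EqOn (fun t : ℝ => ((2:ℝ) * t ^ ((2:ℝ) - 1)) •
      ((1 / Real.sqrt (2 * Real.pi * t ^ (2:ℝ))) * Real.exp (-z ^ 2 / (2 * t ^ (2:ℝ)))
            * (ℓ * Real.exp (-ℓ * t ^ (2:ℝ)))))
      (fun t => (2 * ℓ / √(2 * Real.pi) * Real.exp (-|z| / b)) *
        Real.exp (-(1/2) * (1/b * t - |z| / t)^2)) (Set.Ioi 0) := by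
    intro t ht
    have ht : 0 < t := ht
    have h2 : (2:ℝ) - 1 = 1 := by norm_num
    simp only [h2, Real.rpow_one, Real.rpow_two, smul_eq_mul]
    rw [Real.sqrt_mul (by positivity), Real.sqrt_sq ht.le]
    have hE : Real.exp (-z ^ 2 / (2 * t ^ 2)) * Real.exp (-ℓ * t ^ 2) =
        Real.exp (-|z| / b) * Real.exp (-(1/2) * (1/b * t - |z| / t)^2) := by
      rw [← Real.exp_add, ← Real.exp_add, hℓ, ← sq_abs z]
      congr 1
      field_simp
      ring
    have hp : 0 < √(2 * Real.pi) := by positivity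
    calc _ = 2 * ℓ / √(2 * Real.pi) *
          (Real.exp (-z ^ 2 / (2 * t ^ 2)) * Real.exp (-ℓ * t ^ 2)) := by
            field_simp
      _ = _ := by rw [hE]; ring
  rw [setIntegral_congr_fun measurableSet_Ioi hpt, integral_const_mul,
    J_all (1/b) |z| (by positivity) (abs_nonneg z), hℓ]
  have hp : 0 < √(2 * Real.pi) := by positivity
  field_simp
end
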